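/- arXiv:2410.19234 — 4 statements merged into one kernel-verified Lean document; each statement's English description precedes it below -/
import Mathlib

section
/- Let Ξ be a measurable space, P̂ a probability measure on Ξ, and 𝒫 a nonempty set of probability measures on Ξ. For θ ∈ [0,1] define the TRO ambiguity set 𝒫'_θ := {(1−θ)·P̂ + θ·Q : Q ∈ 𝒫}. Then the family {𝒫'_θ : θ ∈ [0,1]} is non-decreasing, i.e. 𝒫'_{θ₁} ⊆ 𝒫'_{θ₂} whenever 0 ≤ θ₁ < θ₂ ≤ 1, if and only if 𝒫 is star-shaped with star center P̂ (in particular P̂ ∈ 𝒫). -/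
open MeasureTheory

/-- The mixture `(1-θ)·P + θ·Q` of two measures. -/
noncomputable def mix {Ξ : Type*} [MeasurableSpace Ξ] (θ : ℝ) (P Q : Measure Ξ) : Measure Ξ :=
  ENNReal.ofReal (1 - θ) • P + ENNReal.ofReal θ • Q

/-- The TRO ambiguity set `𝒜'_θ = {(1-θ)·P̂ + θ·Q : Q ∈ 𝒜}`. -/
def TROset {Ξ : Type*} [MeasurableSpace Ξ] (Phat : Measure Ξ) (𝒜 : Set (Measure Ξ)) (θ : ℝ) :
    Set (Measure Ξ) := {P | ∃ Q ∈ 𝒜, P = mix θ Phat Q}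

section AmbiguitySets

variable {Ξ : Type*} [MeasurableSpace Ξ]

@[simp]
lemma mix_zero (P Q : Measure Ξ) : mix 0 P Q = P := by
  simp [mix]

@[simp]
lemma mix_one (P Q : Measure Ξ) : mix 1 P Q = Q := by
  simp [mix]

lemma mix_mix {a b : ℝ} (ha₀ : 0 ≤ a) (ha₁ : a ≤ 1) (hb : b ≤ 1) (P Q : Measure Ξ) :
    mix a P (mix b P Q) = mix (a * b) P Q := by
  have weight_left : ENNReal.ofReal (1 - a) + ENNReal.ofReal a * ENNReal.ofReal (1 - b) =
      ENNReal.ofReal (1 - a * b) := by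
    rw [← ENNReal.ofReal_mul ha₀, ← ENNReal.ofReal_add (sub_nonneg.2 ha₁)
      (mul_nonneg ha₀ (sub_nonneg.2 hb))]
    congr 1
    ring
  simp only [mix, smul_add, smul_smul, ← add_assoc, ← add_smul, weight_left,
    ENNReal.ofReal_mul ha₀]

lemma TROset_eq_image (P : Measure Ξ) (𝒜 : Set (Measure Ξ)) (θ : ℝ) :
    TROset P 𝒜 θ = mix θ P '' 𝒜 := by
  simp only [TROset, Set.image, eq_comm]

lemma TROset_subset_iff {P : Measure Ξ} {𝒜 ℬ : Set (Measure Ξ)} {θ : ℝ} :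
    TROset P 𝒜 θ ⊆ ℬ ↔ ∀ Q ∈ 𝒜, mix θ P Q ∈ ℬ := by
  rw [TROset_eq_image, Set.image_subset_iff]
  rfl

lemma TROset_subset_TROset {𝒜 ℬ : Set (Measure Ξ)} (h : 𝒜 ⊆ ℬ) (P : Measure Ξ) (θ : ℝ) :
    TROset P 𝒜 θ ⊆ TROset P ℬ θ := by
  simpa only [TROset_eq_image] using Set.image_mono h

lemma TROset_one (P : Measure Ξ) (𝒜 : Set (Measure Ξ)) : TROset P 𝒜 1 = 𝒜 := by
  simp [TROset]

lemma TROset_TROset {a b : ℝ} (ha₀ : 0 ≤ a) (ha₁ : a ≤ 1) (hb : b ≤ 1) (P : Measure Ξ)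
    (𝒜 : Set (Measure Ξ)) : TROset P (TROset P 𝒜 b) a = TROset P 𝒜 (a * b) := by
  simp only [TROset_eq_image, Set.image_image, mix_mix ha₀ ha₁ hb]

/- Monotonicity is decided by comparison with the endpoint `θ = 1`, where the ambiguity set is `𝒜`:
for `θ₁ < θ₂`, the set at `θ₁` is the ambiguity set of level `θ₂` built from the one of level
`θ₁ / θ₂`. -/
lemma monotoneOn_TROset_iff {P : Measure Ξ} {𝒜 : Set (Measure Ξ)} :
    MonotoneOn (TROset P 𝒜) (Set.Icc 0 1) ↔ ∀ α ∈ Set.Icc (0 : ℝ) 1, TROset P 𝒜 α ⊆ 𝒜 := by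
  constructor
  · intro hmono α hα
    calc TROset P 𝒜 α ⊆ TROset P 𝒜 1 := hmono hα (Set.right_mem_Icc.2 zero_le_one) hα.2
      _ = 𝒜 := TROset_one P 𝒜
  · refine fun hsub ↦ monotoneOn_iff_forall_lt.2 fun θ₁ hθ₁ θ₂ hθ₂ hlt ↦ ?_
    have hpos : 0 < θ₂ := hθ₁.1.trans_lt hlt
    have hratio : θ₁ / θ₂ ∈ Set.Icc (0 : ℝ) 1 :=
      ⟨div_nonneg hθ₁.1 hpos.le, (div_le_one hpos).2 hlt.le⟩
    calc TROset P 𝒜 θ₁ = TROset P 𝒜 (θ₂ * (θ₁ / θ₂)) := by rw [mul_div_cancel₀ _ hpos.ne']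
      _ = TROset P (TROset P 𝒜 (θ₁ / θ₂)) θ₂ := (TROset_TROset hpos.le hθ₂.2 hratio.2 P 𝒜).symm
      _ ⊆ TROset P 𝒜 θ₂ := TROset_subset_TROset (hsub _ hratio) P θ₂

lemma monotoneOn_TROset_iff_forall_lt {P : Measure Ξ} {𝒜 : Set (Measure Ξ)} :
    MonotoneOn (TROset P 𝒜) (Set.Icc 0 1) ↔
      ∀ θ₁ θ₂ : ℝ, 0 ≤ θ₁ → θ₁ < θ₂ → θ₂ ≤ 1 → TROset P 𝒜 θ₁ ⊆ TROset P 𝒜 θ₂ := by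
  rw [monotoneOn_iff_forall_lt]
  exact ⟨fun h θ₁ θ₂ h₀ hlt h₁ ↦ h ⟨h₀, hlt.le.trans h₁⟩ ⟨h₀.trans hlt.le, h₁⟩ hlt,
    fun h θ₁ hθ₁ θ₂ hθ₂ hlt ↦ h θ₁ θ₂ hθ₁.1 hlt hθ₂.2⟩

theorem tro_hierarchical_iff_starShaped_general (P : Measure Ξ) {𝒜 : Set (Measure Ξ)}
    (hne : 𝒜.Nonempty) :
    (∀ θ₁ θ₂ : ℝ, 0 ≤ θ₁ → θ₁ < θ₂ → θ₂ ≤ 1 → TROset P 𝒜 θ₁ ⊆ TROset P 𝒜 θ₂) ↔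
      (P ∈ 𝒜 ∧ ∀ α ∈ Set.Icc (0 : ℝ) 1, ∀ Q ∈ 𝒜, mix α P Q ∈ 𝒜) := by
  rw [← monotoneOn_TROset_iff_forall_lt, monotoneOn_TROset_iff]
  simp only [TROset_subset_iff]
  refine (and_iff_right_of_imp fun hmix ↦ ?_).symm
  obtain ⟨Q, hQ⟩ := hne
  simpa only [mix_zero] using hmix 0 (Set.left_mem_Icc.2 zero_le_one) Q hQ

end AmbiguitySets

/-- The family `{𝒜'_θ : θ ∈ [0,1]}` is non-decreasing iff `𝒜` is star-shaped with
star center `P̂`. -/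
theorem tro_hierarchical_iff_starShaped
    {Ξ : Type*} [MeasurableSpace Ξ] (Phat : Measure Ξ) [IsProbabilityMeasure Phat]
    (𝒜 : Set (Measure Ξ)) (h𝒜ne : 𝒜.Nonempty)
    (h𝒜prob : ∀ Q ∈ 𝒜, IsProbabilityMeasure Q) :
    (∀ θ₁ θ₂ : ℝ, 0 ≤ θ₁ → θ₁ < θ₂ → θ₂ ≤ 1 →
        TROset Phat 𝒜 θ₁ ⊆ TROset Phat 𝒜 θ₂) ↔
      (Phat ∈ 𝒜 ∧ ∀ α ∈ Set.Icc (0:ℝ) 1, ∀ P ∈ 𝒜, mix α Phat P ∈ 𝒜) :=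
  tro_hierarchical_iff_starShaped_general Phat h𝒜ne
end

section
/- Let Ξ be a measurable space, P̂ a probability measure on Ξ, 𝒫 a nonempty set of probability measures on Ξ, X a nonempty set, and f : X × Ξ → ℝ such that for every x ∈ X the function f(x,·) is integrable with respect to P̂ and with respect to every Q ∈ 𝒫, and there is C ≥ 0 with |∫ f(x,·) dP̂| ≤ C and |∫ f(x,·) dQ| ≤ C for all x ∈ X, Q ∈ 𝒫. For θ ∈ [0,1] let 𝒫'_θ := {(1−θ)·P̂ + θ·Q : Q ∈ 𝒫} and v(θ) := inf_{x∈X} sup_{P∈𝒫'_θ} ∫ f(x,·) dP. Then: (i) v is concave on [0,1]; and (ii) for every θ ∈ [0,1], (1−θ)·v(0) + θ·v(1) ≤ v(θ) ≤ (1−θ)·v(0) + θ·v(1) + 4C·θ(1−θ). -/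
open MeasureTheory

/-!
Integration is affine in the measure, so the objective at level `θ` of a decision `x` is
`(1 - θ) * a x + θ * b x`, where `a x` is the expectation under `Phat` and `b x` the worst-case
expectation over `𝒜`. Thus `v` is an infimum of affine functions of `θ`, which is concave, and the
lower bound is concavity along the chord from `0` to `1`. For the upper bound, replacing `b x` by a
common upper bound `B` of all the `b x` before minimising gives `v θ ≤ (1 - θ) * v 0 + θ * B`, an
excess of `θ * (B - v 1)` over the chord; exchanging the endpoints gives `(1 - θ) * (A - v 0)`. If
all values lie in `[m, M]`, the excess is at most `(M - m) * min θ (1 - θ)`, and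
`min θ (1 - θ) ≤ 2 * θ * (1 - θ)` on `[0, 1]`.
-/

open Set

theorem concaveOn_iInf {ι 𝕜 E β : Type*} [Nonempty ι] [Semiring 𝕜] [PartialOrder 𝕜]
    [AddCommMonoid E] [SMul 𝕜 E] [ConditionallyCompleteLattice β] [AddCommMonoid β]
    [IsOrderedAddMonoid β] [SMul 𝕜 β] [PosSMulMono 𝕜 β] {s : Set E} {g : ι → E → β}
    (hg : ∀ i, ConcaveOn 𝕜 s (g i)) (hbdd : ∀ x ∈ s, BddBelow (range fun i => g i x)) :
    ConcaveOn 𝕜 s fun x => ⨅ i, g i x := by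
  refine ⟨(hg (Classical.arbitrary ι)).1, fun x hx y hy p q hp hq hpq => le_ciInf fun i => ?_⟩
  calc p • (⨅ i, g i x) + q • (⨅ i, g i y)
      ≤ p • g i x + q • g i y := by
        gcongr
        · exact ciInf_le (hbdd x hx) i
        · exact ciInf_le (hbdd y hy) i
    _ ≤ g i (p • x + q • y) := (hg i).2 hx hy hp hq hpq

theorem min_one_sub_le_two_mul_mul_one_sub {θ : ℝ} (hθ : θ ∈ Icc (0 : ℝ) 1) :
    min θ (1 - θ) ≤ 2 * θ * (1 - θ) := by
  obtain ⟨hθ₀, hθ₁⟩ := hθ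
  rcases le_total θ (1 - θ) with h | h
  · rw [min_eq_left h]
    nlinarith
  · rw [min_eq_right h]
    nlinarith

/-- The value at `θ` of the infimum of the affine functions on `ℝ` that take the value `a i` at `0`
and `b i` at `1`. It expresses the trade-off value as a function of `θ` alone. -/
noncomputable def lowerEnvelope {ι : Type*} (a b : ι → ℝ) (θ : ℝ) : ℝ :=
  ⨅ i, ((1 - θ) * a i + θ * b i)

section LowerEnvelope

variable {ι : Type*} {a b : ι → ℝ} {θ : ℝ}

@[simp]
theorem lowerEnvelope_zero (a b : ι → ℝ) : lowerEnvelope a b 0 = ⨅ i, a i := by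
  simp [lowerEnvelope]

theorem lowerEnvelope_one_sub (a b : ι → ℝ) (θ : ℝ) :
    lowerEnvelope a b (1 - θ) = lowerEnvelope b a θ := by
  simp only [lowerEnvelope, sub_sub_cancel, add_comm]

@[simp]
theorem lowerEnvelope_one (a b : ι → ℝ) : lowerEnvelope a b 1 = ⨅ i, b i := by
  simp [lowerEnvelope]

theorem bddBelow_range_one_sub_mul_add_mul (ha : BddBelow (range a)) (hb : BddBelow (range b))
    (hθ : θ ∈ Icc (0 : ℝ) 1) : BddBelow (range fun i => (1 - θ) * a i + θ * b i) := by
  obtain ⟨k, hk⟩ := ha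
  obtain ⟨l, hl⟩ := hb
  refine ⟨(1 - θ) * k + θ * l, forall_mem_range.2 fun i => ?_⟩
  have hθ₀ := hθ.1
  have hθ₁ := sub_nonneg.2 hθ.2
  gcongr
  · exact hk (mem_range_self i)
  · exact hl (mem_range_self i)

variable [Nonempty ι]

theorem concaveOn_lowerEnvelope (ha : BddBelow (range a)) (hb : BddBelow (range b)) :
    ConcaveOn ℝ (Icc 0 1) (lowerEnvelope a b) := by
  refine concaveOn_iInf (fun i => ⟨convex_Icc 0 1, fun s _ t _ p q _ _ hpq => le_of_eq ?_⟩)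
    fun θ hθ => bddBelow_range_one_sub_mul_add_mul ha hb hθ
  simp only [smul_eq_mul]
  linear_combination a i * hpq

theorem lowerEnvelope_le_of_right_le (ha : BddBelow (range a)) (hb : BddBelow (range b))
    (hθ : θ ∈ Icc (0 : ℝ) 1) {B : ℝ} (hB : ∀ i, b i ≤ B) :
    lowerEnvelope a b θ ≤ (1 - θ) * lowerEnvelope a b 0 + θ * B := by
  rw [lowerEnvelope_zero, ← sub_le_iff_le_add, Real.mul_iInf_of_nonneg (sub_nonneg.2 hθ.2)]
  refine le_ciInf fun i => sub_le_iff_le_add.2 ?_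
  calc lowerEnvelope a b θ
      ≤ (1 - θ) * a i + θ * b i := ciInf_le (bddBelow_range_one_sub_mul_add_mul ha hb hθ) i
    _ ≤ (1 - θ) * a i + θ * B := by
        gcongr
        · exact hθ.1
        · exact hB i

theorem lowerEnvelope_le_of_left_le (ha : BddBelow (range a)) (hb : BddBelow (range b))
    (hθ : θ ∈ Icc (0 : ℝ) 1) {A : ℝ} (hA : ∀ i, a i ≤ A) :
    lowerEnvelope a b θ ≤ (1 - θ) * A + θ * lowerEnvelope a b 1 := by
  have h := lowerEnvelope_le_of_right_le hb ha (Icc.mem_iff_one_sub_mem.1 hθ) hA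
  simpa only [lowerEnvelope_one_sub, lowerEnvelope_zero, lowerEnvelope_one, sub_sub_cancel,
    add_comm] using h

theorem lowerEnvelope_le_chord_add_mul_min {m M : ℝ} (ha : ∀ i, a i ∈ Icc m M)
    (hb : ∀ i, b i ∈ Icc m M) (hθ : θ ∈ Icc (0 : ℝ) 1) :
    lowerEnvelope a b θ ≤ (1 - θ) * lowerEnvelope a b 0 + θ * lowerEnvelope a b 1
      + (M - m) * min θ (1 - θ) := by
  have ha_bdd : BddBelow (range a) := ⟨m, forall_mem_range.2 fun i => (ha i).1⟩
  have hb_bdd : BddBelow (range b) := ⟨m, forall_mem_range.2 fun i => (hb i).1⟩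
  have hm₀ : m ≤ lowerEnvelope a b 0 := by
    simpa only [lowerEnvelope_zero] using le_ciInf fun i => (ha i).1
  have hm₁ : m ≤ lowerEnvelope a b 1 := by
    simpa only [lowerEnvelope_one] using le_ciInf fun i => (hb i).1
  rcases min_choice θ (1 - θ) with h | h <;> rw [h]
  · have hle := lowerEnvelope_le_of_right_le ha_bdd hb_bdd hθ fun i => (hb i).2
    linarith [mul_le_mul_of_nonneg_left hm₁ hθ.1]
  · have hle := lowerEnvelope_le_of_left_le ha_bdd hb_bdd hθ fun i => (ha i).2
    linarith [mul_le_mul_of_nonneg_left hm₀ (sub_nonneg.2 hθ.2)]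

end LowerEnvelope

section Mixture

variable {Ξ : Type*} [MeasurableSpace Ξ] {P : Measure Ξ} {θ : ℝ}

theorem integral_mix {E : Type*} [NormedAddCommGroup E] [NormedSpace ℝ E] {Q : Measure Ξ}
    {g : Ξ → E} (hθ : θ ∈ Icc (0 : ℝ) 1) (hP : Integrable g P) (hQ : Integrable g Q) :
    ∫ ξ, g ξ ∂(mix θ P Q) = (1 - θ) • ∫ ξ, g ξ ∂P + θ • ∫ ξ, g ξ ∂Q := by
  rw [mix, integral_add_measure (hP.smul_measure ENNReal.ofReal_ne_top)
      (hQ.smul_measure ENNReal.ofReal_ne_top), integral_smul_measure, integral_smul_measure,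
    ENNReal.toReal_ofReal (sub_nonneg.2 hθ.2), ENNReal.toReal_ofReal hθ.1]

/-- The worst-case expectation of `g` over the ambiguity set `𝒜`, i.e. the distributionally robust
objective. It is a real supremum, hence `0` when the integrals are unbounded above or `𝒜` is
empty. -/
noncomputable def worstCaseIntegral (𝒜 : Set (Measure Ξ)) (g : Ξ → ℝ) : ℝ :=
  ⨆ Q : 𝒜, ∫ ξ, g ξ ∂(Q : Measure Ξ)

variable {𝒜 : Set (Measure Ξ)} {g : Ξ → ℝ}

theorem worstCaseIntegral_mem_Icc (h𝒜 : 𝒜.Nonempty) {m M : ℝ}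
    (hg : ∀ Q ∈ 𝒜, ∫ ξ, g ξ ∂Q ∈ Icc m M) : worstCaseIntegral 𝒜 g ∈ Icc m M := by
  have : Nonempty 𝒜 := h𝒜.to_subtype
  obtain ⟨Q, hQ⟩ := h𝒜
  have hbdd : BddAbove (range fun Q : 𝒜 => ∫ ξ, g ξ ∂(Q : Measure Ξ)) :=
    ⟨M, forall_mem_range.2 fun Q => (hg Q Q.2).2⟩
  exact ⟨(hg Q hQ).1.trans (le_ciSup hbdd ⟨Q, hQ⟩), ciSup_le fun Q => (hg Q Q.2).2⟩

theorem iSup_integral_mix (h𝒜 : 𝒜.Nonempty) (hθ : θ ∈ Icc (0 : ℝ) 1) (hP : Integrable g P)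
    (hg : ∀ Q ∈ 𝒜, Integrable g Q)
    (hbdd : BddAbove (range fun Q : 𝒜 => ∫ ξ, g ξ ∂(Q : Measure Ξ))) :
    ⨆ Q : 𝒜, ∫ ξ, g ξ ∂(mix θ P Q) = (1 - θ) * ∫ ξ, g ξ ∂P + θ * worstCaseIntegral 𝒜 g := by
  have : Nonempty 𝒜 := h𝒜.to_subtype
  have hbdd_mul : BddAbove (range fun Q : 𝒜 => θ * ∫ ξ, g ξ ∂(Q : Measure Ξ)) := by
    obtain ⟨M, hM⟩ := hbdd
    exact ⟨θ * M, forall_mem_range.2 fun Q =>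
      mul_le_mul_of_nonneg_left (hM (mem_range_self Q)) hθ.1⟩
  calc ⨆ Q : 𝒜, ∫ ξ, g ξ ∂(mix θ P Q)
      = ⨆ Q : 𝒜, ((1 - θ) * ∫ ξ, g ξ ∂P + θ * ∫ ξ, g ξ ∂(Q : Measure Ξ)) :=
        iSup_congr fun Q => integral_mix hθ hP (hg Q Q.2)
    _ = (1 - θ) * ∫ ξ, g ξ ∂P + θ * worstCaseIntegral 𝒜 g := by
        rw [worstCaseIntegral, Real.mul_iSup_of_nonneg hθ.1, add_ciSup hbdd_mul]

end Mixture

theorem tro_optimal_value_concave_and_expansion_general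
    {Ξ X : Type*} [MeasurableSpace Ξ] [Nonempty X]
    (Phat : Measure Ξ) (𝒜 : Set (Measure Ξ)) (h𝒜ne : 𝒜.Nonempty)
    (f : X → Ξ → ℝ)
    (hint0 : ∀ x, Integrable (f x) Phat)
    (hint : ∀ x, ∀ Q ∈ 𝒜, Integrable (f x) Q)
    (m M : ℝ)
    (hb0 : ∀ x, ∫ ξ, f x ξ ∂Phat ∈ Icc m M)
    (hb : ∀ x, ∀ Q ∈ 𝒜, ∫ ξ, f x ξ ∂Q ∈ Icc m M)
    (v : ℝ → ℝ)
    (hv : ∀ θ, v θ = ⨅ x : X, ⨆ Q : 𝒜, ∫ ξ, f x ξ ∂(mix θ Phat (Q : Measure Ξ))) :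
    ConcaveOn ℝ (Icc (0 : ℝ) 1) v ∧
      ∀ θ ∈ Icc (0 : ℝ) 1,
        (1 - θ) * v 0 + θ * v 1 ≤ v θ ∧
        v θ ≤ (1 - θ) * v 0 + θ * v 1 + (M - m) * min θ (1 - θ) := by
  set a : X → ℝ := fun x => ∫ ξ, f x ξ ∂Phat
  set b : X → ℝ := fun x => worstCaseIntegral 𝒜 (f x)
  have hb_mem : ∀ x, b x ∈ Icc m M := fun x => worstCaseIntegral_mem_Icc h𝒜ne (hb x)
  have hv_eq : EqOn (lowerEnvelope a b) v (Icc 0 1) := fun θ hθ => by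
    rw [hv, lowerEnvelope]
    exact iInf_congr fun x => (iSup_integral_mix h𝒜ne hθ (hint0 x) (hint x)
      ⟨M, forall_mem_range.2 fun Q => (hb x Q Q.2).2⟩).symm
  have hconc : ConcaveOn ℝ (Icc 0 1) v :=
    (concaveOn_lowerEnvelope ⟨m, forall_mem_range.2 fun x => (hb0 x).1⟩
      ⟨m, forall_mem_range.2 fun x => (hb_mem x).1⟩).congr hv_eq
  have h0 : (0 : ℝ) ∈ Icc (0 : ℝ) 1 := left_mem_Icc.2 zero_le_one
  have h1 : (1 : ℝ) ∈ Icc (0 : ℝ) 1 := right_mem_Icc.2 zero_le_one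
  refine ⟨hconc, fun θ hθ => ⟨?_, ?_⟩⟩
  · simpa using hconc.2 h0 h1 (sub_nonneg.2 hθ.2) hθ.1 (sub_add_cancel 1 θ)
  · rw [← hv_eq h0, ← hv_eq h1, ← hv_eq hθ]
    exact lowerEnvelope_le_chord_add_mul_min hb0 hb_mem hθ

/-- The TRO optimal value `v` is concave on `[0,1]` and satisfies
`(1−θ)v(0) + θv(1) ≤ v(θ) ≤ (1−θ)v(0) + θv(1) + 4Cθ(1−θ)`. -/
theorem tro_optimal_value_concave_and_expansion
    {Ξ X : Type*} [MeasurableSpace Ξ] [Nonempty X]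
    (Phat : Measure Ξ) [IsProbabilityMeasure Phat]
    (𝒜 : Set (Measure Ξ)) (h𝒜ne : 𝒜.Nonempty)
    (h𝒜prob : ∀ Q ∈ 𝒜, IsProbabilityMeasure Q)
    (f : X → Ξ → ℝ)
    (hint0 : ∀ x, Integrable (f x) Phat)
    (hint : ∀ x, ∀ Q ∈ 𝒜, Integrable (f x) Q)
    (C : ℝ) (hC : 0 ≤ C)
    (hb0 : ∀ x, |∫ ξ, f x ξ ∂Phat| ≤ C)
    (hb : ∀ x, ∀ Q ∈ 𝒜, |∫ ξ, f x ξ ∂Q| ≤ C)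
    (v : ℝ → ℝ)
    (hv : ∀ θ, v θ = ⨅ x : X, ⨆ Q : 𝒜, ∫ ξ, f x ξ ∂(mix θ Phat (Q : Measure Ξ))) :
    ConcaveOn ℝ (Set.Icc (0:ℝ) 1) v ∧
      ∀ θ ∈ Set.Icc (0:ℝ) 1,
        (1 - θ) * v 0 + θ * v 1 ≤ v θ ∧
        v θ ≤ (1 - θ) * v 0 + θ * v 1 + 4 * C * θ * (1 - θ) := by
  obtain ⟨hconc, hexp⟩ := tro_optimal_value_concave_and_expansion_general Phat 𝒜 h𝒜ne f hint0 hint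
    (-C) C (fun x => abs_le.1 (hb0 x)) (fun x Q hQ => abs_le.1 (hb x Q hQ)) v hv
  exact ⟨hconc, fun θ hθ => ⟨(hexp θ hθ).1, (hexp θ hθ).2.trans <| by
    linarith [mul_le_mul_of_nonneg_left (min_one_sub_le_two_mul_mul_one_sub hθ) hC]⟩⟩
end

section
/- Let g : [0,1] → ℝ be continuous and concave, and let v* ∈ ℝ satisfy g(0) ≤ v* ≤ g(1). Then there exists θᵘ ∈ [0,1] such that g(θᵘ) = v* and, for every θ ∈ [0, θᵘ], |g(θ) − v*| ≤ |g(0) − v*|. -/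
/-!
Take for `θᵘ` the first point at which `g` reaches `v*`: up to it `g` stays at or below `v*`, and
concavity, in fact quasiconcavity, keeps it at or above `min (g 0) (g θᵘ) = g 0`. A later solution
of `g θ = v*` would not do, since `g` may overshoot `v*` and come back.
-/

open Set

theorem min_le_of_quasiconcaveOn_of_mem_Icc {𝕜 β : Type*} [Field 𝕜] [LinearOrder 𝕜]
    [IsStrictOrderedRing 𝕜] [LinearOrder β] {s : Set 𝕜} {f : 𝕜 → β} {x y z : 𝕜}
    (hf : QuasiconcaveOn 𝕜 s f) (hx : x ∈ s) (hy : y ∈ s) (hz : z ∈ Icc x y) :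
    min (f x) (f y) ≤ f z :=
  ((hf (min (f x) (f y))).ordConnected.out ⟨hx, min_le_left _ _⟩ ⟨hy, min_le_right _ _⟩ hz).2

theorem exists_mem_Icc_eq_and_forall_le {α δ : Type*} [ConditionallyCompleteLinearOrder α]
    [TopologicalSpace α] [OrderTopology α] [DenselyOrdered α] [LinearOrder δ]
    [TopologicalSpace δ] [OrderClosedTopology δ] {f : α → δ} {a b : α} {c : δ} (hab : a ≤ b)
    (hf : ContinuousOn f (Icc a b)) (ha : f a ≤ c) (hb : c ≤ f b) :
    ∃ u ∈ Icc a b, f u = c ∧ ∀ t ∈ Icc a u, f t ≤ c := by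
  have hcompact : IsCompact (Icc a b ∩ f ⁻¹' Ici c) :=
    isCompact_Icc.of_isClosed_subset
      (hf.preimage_isClosed_of_isClosed isClosed_Icc isClosed_Ici) inter_subset_left
  obtain ⟨u, ⟨hu, hcu⟩, hleast⟩ := hcompact.exists_isLeast ⟨b, right_mem_Icc.2 hab, hb⟩
  have eq_of_le {t : α} (ht : t ∈ Icc a u) (hct : c ≤ f t) : t = u :=
    ht.2.antisymm (hleast ⟨⟨ht.1, ht.2.trans hu.2⟩, hct⟩)
  have hfu : f u = c := by
    obtain ⟨x, hx, rfl⟩ :=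
      intermediate_value_Icc hu.1 (hf.mono (Icc_subset_Icc_right hu.2)) ⟨ha, hcu⟩
    rw [eq_of_le hx le_rfl]
  refine ⟨u, hu, hfu, fun t ht => ?_⟩
  rcases le_total (f t) c with htc | hct
  · exact htc
  · rw [eq_of_le ht hct, hfu]

theorem concave_unbiased_and_bias_reduction_general {β : Type*} [AddCommGroup β] [LinearOrder β]
    [IsOrderedAddMonoid β] [TopologicalSpace β] [OrderClosedTopology β] {a b : ℝ} (hab : a ≤ b)
    {g : ℝ → β} (hgc : ContinuousOn g (Icc a b)) (hg : QuasiconcaveOn ℝ (Icc a b) g) {v : β}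
    (ha : g a ≤ v) (hb : v ≤ g b) :
    ∃ u ∈ Icc a b, g u = v ∧ ∀ θ ∈ Icc a u, |g θ - v| ≤ |g a - v| := by
  obtain ⟨u, hu, rfl, hle⟩ := exists_mem_Icc_eq_and_forall_le hab hgc ha hb
  refine ⟨u, hu, rfl, fun θ hθ => abs_sub_left_of_mem_uIcc ?_⟩
  have hge : g a ≤ g θ := by
    simpa only [min_eq_left ha] using
      min_le_of_quasiconcaveOn_of_mem_Icc hg (left_mem_Icc.2 hab) hu hθ
  exact mem_uIcc_of_ge hge (hle θ hθ)

/-- For a continuous concave `g : [0,1] → ℝ` with `g(0) ≤ v* ≤ g(1)` there is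
`θᵘ ∈ [0,1]` with `g(θᵘ) = v*` and `|g(θ) − v*| ≤ |g(0) − v*|` for all `θ ∈ [0,θᵘ]`. -/
theorem concave_unbiased_and_bias_reduction
    (g : ℝ → ℝ) (hgc : ContinuousOn g (Set.Icc (0:ℝ) 1))
    (hconc : ConcaveOn ℝ (Set.Icc (0:ℝ) 1) g)
    (vstar : ℝ) (h0 : g 0 ≤ vstar) (h1 : vstar ≤ g 1) :
    ∃ θu ∈ Set.Icc (0:ℝ) 1, g θu = vstar ∧
      ∀ θ ∈ Set.Icc (0:ℝ) θu, |g θ - vstar| ≤ |g 0 - vstar| :=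
  concave_unbiased_and_bias_reduction_general zero_le_one hgc hconc.quasiconcaveOn h0 h1
end

section
/- Let Ξ be a measurable space, X a nonempty subset of a real normed vector space, and f : X × Ξ → ℝ. Let 𝒫₁ and 𝒫₂ be nonempty sets of probability measures on Ξ such that f(x,·) is integrable with respect to every Q ∈ 𝒫₁ ∪ 𝒫₂ for every x ∈ X, with a constant C ≥ 0 such that |∫ f(x,·) dQ| ≤ C for all x ∈ X and Q ∈ 𝒫₁ ∪ 𝒫₂. For i = 1, 2 let v_i := inf_{x∈X} sup_{Q∈𝒫_i} ∫ f(x,·) dQ and X*_i := {x ∈ X : sup_{Q∈𝒫_i} ∫ f(x,·) dQ = v_i}, and assume X*₁ and X*₂ are nonempty. Suppose the second-order growth condition holds at X*₁: there is τ > 0 such that sup_{Q∈𝒫₁} ∫ f(x,·) dQ ≥ v₁ + τ·(inf_{y∈X*₁} ‖x−y‖)² for all x ∈ X. Then sup_{x∈X*₂} inf_{y∈X*₁} ‖x−y‖ ≤ √(3·ℍ(𝒫₁,𝒫₂)/τ). -/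
open MeasureTheory

/-- The pseudometric `𝕕(P₁,P₂) = sup_{x ∈ X} |∫ f(x,·) dP₁ − ∫ f(x,·) dP₂|`,
the supremum being taken over the decision set `X`. -/
noncomputable def pseudoDist {Ξ E : Type*} [MeasurableSpace Ξ] (X : Set E) (f : E → Ξ → ℝ)
    (P₁ P₂ : Measure Ξ) : ℝ :=
  ⨆ x : X, |(∫ ξ, f (x : E) ξ ∂P₁) - ∫ ξ, f (x : E) ξ ∂P₂|

/-- The Hausdorff distance `ℍ(𝒫₁,𝒫₂)` between two sets of measures under `pseudoDist`. -/
noncomputable def hausdorffDistSets {Ξ E : Type*} [MeasurableSpace Ξ] (X : Set E)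
    (f : E → Ξ → ℝ) (𝒜₁ 𝒜₂ : Set (Measure Ξ)) : ℝ :=
  max (⨆ Q : 𝒜₁, ⨅ P : 𝒜₂, pseudoDist X f (Q : Measure Ξ) (P : Measure Ξ))
      (⨆ Q : 𝒜₂, ⨅ P : 𝒜₁, pseudoDist X f (Q : Measure Ξ) (P : Measure Ξ))

/-!
If the worst-case objectives `φ₁`, `φ₂` of two ambiguity sets differ by at most `δ` on `X`, then for
`x` optimal for `φ₂` and `y` optimal for `φ₁`
`v₁ + τ · d(x, X*₁)² ≤ φ₁ x ≤ φ₂ x + δ ≤ φ₂ y + δ ≤ φ₁ y + 2δ = v₁ + 2δ`,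
and `ℍ(𝒫₁, 𝒫₂)` is an admissible `δ`.
-/

section AmbiguitySets

variable {Ξ E : Type*} [MeasurableSpace Ξ]

/-- The distance `𝔻(P, 𝒬)` from a measure to a set of measures under `pseudoDist`. -/
noncomputable def pseudoInfDist (X : Set E) (f : E → Ξ → ℝ) (P : Measure Ξ)
    (𝒬 : Set (Measure Ξ)) : ℝ :=
  ⨅ Q : 𝒬, pseudoDist X f P (Q : Measure Ξ)

/-- The one-sided Hausdorff distance (excess) `sup_{Q ∈ 𝒜} 𝔻(Q, ℬ)` of `𝒜` over `ℬ`. -/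
noncomputable def pseudoExcess (X : Set E) (f : E → Ξ → ℝ) (𝒜 ℬ : Set (Measure Ξ)) : ℝ :=
  ⨆ Q : 𝒜, pseudoInfDist X f (Q : Measure Ξ) ℬ

/-- The worst-case expected cost `sup_{Q ∈ 𝒜} ∫ f(x,·) dQ` of the decision `x`, the objective of
the robust problem with ambiguity set `𝒜`. -/
noncomputable def worstCase (f : E → Ξ → ℝ) (𝒜 : Set (Measure Ξ)) (x : E) : ℝ :=
  ⨆ Q : 𝒜, ∫ ξ, f x ξ ∂(Q : Measure Ξ)

/-- The optimal value `inf_{x ∈ X} sup_{Q ∈ 𝒜} ∫ f(x,·) dQ` of the robust problem. -/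
noncomputable def robustValue (X : Set E) (f : E → Ξ → ℝ) (𝒜 : Set (Measure Ξ)) : ℝ :=
  ⨅ x : X, worstCase f 𝒜 (x : E)

/-- The set of optimal decisions of the robust problem. -/
def robustSolutions (X : Set E) (f : E → Ξ → ℝ) (𝒜 : Set (Measure Ξ)) : Set E :=
  {x ∈ X | worstCase f 𝒜 x = robustValue X f 𝒜}

variable {X : Set E} {f : E → Ξ → ℝ} {P Q : Measure Ξ} {𝒜 ℬ : Set (Measure Ξ)} {C D : ℝ} {x y : E}

lemma pseudoDist_nonneg : 0 ≤ pseudoDist X f P Q :=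
  Real.iSup_nonneg fun _ => abs_nonneg _

lemma abs_integral_sub_integral_le_add (hP : |∫ ξ, f x ξ ∂P| ≤ C) (hQ : |∫ ξ, f x ξ ∂Q| ≤ D) :
    |(∫ ξ, f x ξ ∂P) - ∫ ξ, f x ξ ∂Q| ≤ C + D :=
  (abs_sub _ _).trans (add_le_add hP hQ)

lemma pseudoDist_le_add (hX : X.Nonempty) (hP : ∀ z ∈ X, |∫ ξ, f z ξ ∂P| ≤ C)
    (hQ : ∀ z ∈ X, |∫ ξ, f z ξ ∂Q| ≤ D) : pseudoDist X f P Q ≤ C + D :=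
  have := hX.to_subtype
  ciSup_le fun z => abs_integral_sub_integral_le_add (hP z z.2) (hQ z z.2)

lemma abs_integral_sub_integral_le_pseudoDist (hP : ∀ z ∈ X, |∫ ξ, f z ξ ∂P| ≤ C)
    (hQ : ∀ z ∈ X, |∫ ξ, f z ξ ∂Q| ≤ D) (hx : x ∈ X) :
    |(∫ ξ, f x ξ ∂P) - ∫ ξ, f x ξ ∂Q| ≤ pseudoDist X f P Q :=
  le_ciSup (f := fun z : X => |(∫ ξ, f z ξ ∂P) - ∫ ξ, f z ξ ∂Q|)
    ⟨C + D, Set.forall_mem_range.2 fun z =>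
      abs_integral_sub_integral_le_add (hP z z.2) (hQ z z.2)⟩ ⟨x, hx⟩

lemma pseudoInfDist_le_pseudoDist (hQ : Q ∈ ℬ) : pseudoInfDist X f P ℬ ≤ pseudoDist X f P Q :=
  ciInf_le (f := fun Q : ℬ => pseudoDist X f P (Q : Measure Ξ))
    ⟨0, Set.forall_mem_range.2 fun _ => pseudoDist_nonneg⟩ ⟨Q, hQ⟩

lemma pseudoInfDist_le_pseudoExcess (hX : X.Nonempty) (hℬ : ℬ.Nonempty)
    (hC : ∀ z ∈ X, ∀ Q ∈ 𝒜, |∫ ξ, f z ξ ∂Q| ≤ C)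
    (hD : ∀ z ∈ X, ∀ Q ∈ ℬ, |∫ ξ, f z ξ ∂Q| ≤ D) (hQ : Q ∈ 𝒜) :
    pseudoInfDist X f Q ℬ ≤ pseudoExcess X f 𝒜 ℬ := by
  obtain ⟨P, hP⟩ := hℬ
  refine le_ciSup (f := fun Q : 𝒜 => pseudoInfDist X f (Q : Measure Ξ) ℬ)
    ⟨C + D, Set.forall_mem_range.2 fun Q => ?_⟩ ⟨Q, hQ⟩
  exact (pseudoInfDist_le_pseudoDist hP).trans
    (pseudoDist_le_add hX (fun z hz => hC z hz Q Q.2) fun z hz => hD z hz P hP)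

lemma pseudoExcess_nonneg : 0 ≤ pseudoExcess X f 𝒜 ℬ :=
  Real.iSup_nonneg fun _ => Real.iInf_nonneg fun _ => pseudoDist_nonneg

lemma pseudoExcess_le_hausdorffDistSets : pseudoExcess X f 𝒜 ℬ ≤ hausdorffDistSets X f 𝒜 ℬ :=
  le_max_left _ _

lemma hausdorffDistSets_nonneg : 0 ≤ hausdorffDistSets X f 𝒜 ℬ :=
  pseudoExcess_nonneg.trans pseudoExcess_le_hausdorffDistSets

lemma hausdorffDistSets_comm : hausdorffDistSets X f 𝒜 ℬ = hausdorffDistSets X f ℬ 𝒜 :=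
  max_comm _ _

lemma integral_le_worstCase (hC : ∀ Q ∈ 𝒜, ∫ ξ, f x ξ ∂Q ≤ C) (hQ : Q ∈ 𝒜) :
    ∫ ξ, f x ξ ∂Q ≤ worstCase f 𝒜 x :=
  le_ciSup (f := fun Q : 𝒜 => ∫ ξ, f x ξ ∂(Q : Measure Ξ))
    ⟨C, Set.forall_mem_range.2 fun Q => hC Q Q.2⟩ ⟨Q, hQ⟩

lemma integral_le_worstCase_add_pseudoInfDist (hℬ : ℬ.Nonempty)
    (hP : ∀ z ∈ X, |∫ ξ, f z ξ ∂P| ≤ C) (hD : ∀ z ∈ X, ∀ Q ∈ ℬ, |∫ ξ, f z ξ ∂Q| ≤ D)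
    (hx : x ∈ X) : ∫ ξ, f x ξ ∂P ≤ worstCase f ℬ x + pseudoInfDist X f P ℬ := by
  have := hℬ.to_subtype
  suffices (∫ ξ, f x ξ ∂P) - worstCase f ℬ x ≤ pseudoInfDist X f P ℬ by linarith
  refine le_ciInf fun Q => ?_
  calc (∫ ξ, f x ξ ∂P) - worstCase f ℬ x
      ≤ (∫ ξ, f x ξ ∂P) - ∫ ξ, f x ξ ∂(Q : Measure Ξ) :=
        sub_le_sub_left (integral_le_worstCase (fun Q hQ => le_of_abs_le (hD x hx Q hQ)) Q.2) _
    _ ≤ |(∫ ξ, f x ξ ∂P) - ∫ ξ, f x ξ ∂(Q : Measure Ξ)| := le_abs_self _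
    _ ≤ pseudoDist X f P Q :=
        abs_integral_sub_integral_le_pseudoDist hP (fun z hz => hD z hz Q Q.2) hx

lemma worstCase_le_worstCase_add_pseudoExcess (h𝒜 : 𝒜.Nonempty) (hℬ : ℬ.Nonempty)
    (hC : ∀ z ∈ X, ∀ Q ∈ 𝒜, |∫ ξ, f z ξ ∂Q| ≤ C)
    (hD : ∀ z ∈ X, ∀ Q ∈ ℬ, |∫ ξ, f z ξ ∂Q| ≤ D) (hx : x ∈ X) :
    worstCase f 𝒜 x ≤ worstCase f ℬ x + pseudoExcess X f 𝒜 ℬ := by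
  have := h𝒜.to_subtype
  refine ciSup_le fun Q => ?_
  calc ∫ ξ, f x ξ ∂(Q : Measure Ξ)
      ≤ worstCase f ℬ x + pseudoInfDist X f Q ℬ :=
        integral_le_worstCase_add_pseudoInfDist hℬ (fun z hz => hC z hz Q Q.2) hD hx
    _ ≤ worstCase f ℬ x + pseudoExcess X f 𝒜 ℬ :=
        add_le_add_right (pseudoInfDist_le_pseudoExcess ⟨x, hx⟩ hℬ hC hD Q.2) _

lemma worstCase_le_worstCase_add_hausdorffDistSets (h𝒜 : 𝒜.Nonempty) (hℬ : ℬ.Nonempty)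
    (hC : ∀ z ∈ X, ∀ Q ∈ 𝒜, |∫ ξ, f z ξ ∂Q| ≤ C)
    (hD : ∀ z ∈ X, ∀ Q ∈ ℬ, |∫ ξ, f z ξ ∂Q| ≤ D) (hx : x ∈ X) :
    worstCase f 𝒜 x ≤ worstCase f ℬ x + hausdorffDistSets X f 𝒜 ℬ :=
  (worstCase_le_worstCase_add_pseudoExcess h𝒜 hℬ hC hD hx).trans
    (add_le_add_right pseudoExcess_le_hausdorffDistSets _)

lemma neg_le_worstCase (h𝒜 : 𝒜.Nonempty) (hC : ∀ Q ∈ 𝒜, |∫ ξ, f x ξ ∂Q| ≤ C) :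
    -C ≤ worstCase f 𝒜 x := by
  obtain ⟨Q, hQ⟩ := h𝒜
  exact (neg_le_of_abs_le (hC Q hQ)).trans
    (integral_le_worstCase (fun Q hQ => le_of_abs_le (hC Q hQ)) hQ)

lemma worstCase_le_of_mem_robustSolutions (h𝒜 : 𝒜.Nonempty)
    (hC : ∀ z ∈ X, ∀ Q ∈ 𝒜, |∫ ξ, f z ξ ∂Q| ≤ C) (hx : x ∈ robustSolutions X f 𝒜) (hy : y ∈ X) :
    worstCase f 𝒜 x ≤ worstCase f 𝒜 y :=
  hx.2.trans_le <| ciInf_le (f := fun z : X => worstCase f 𝒜 (z : E))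
    ⟨-C, Set.forall_mem_range.2 fun z => neg_le_worstCase h𝒜 (hC z z.2)⟩ ⟨y, hy⟩

end AmbiguitySets

lemma le_sqrt_of_quadratic_growth {α : Type*} {φ ψ : α → ℝ} {x y : α} {r τ δ : ℝ} (hτ : 0 < τ)
    (growth : φ y + τ * r ^ 2 ≤ φ x) (hx : φ x ≤ ψ x + δ) (hψ : ψ x ≤ ψ y)
    (hy : ψ y ≤ φ y + δ) : r ≤ √(2 * δ / τ) := by
  apply Real.le_sqrt_of_sq_le
  rw [le_div_iff₀ hτ]
  linarith

theorem dro_optimal_solutions_deviation_bound_general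
    {Ξ E : Type*} [MeasurableSpace Ξ] [PseudoMetricSpace E] {X : Set E} {f : E → Ξ → ℝ}
    {𝒜₁ 𝒜₂ : Set (Measure Ξ)} (h₁ : 𝒜₁.Nonempty) (h₂ : 𝒜₂.Nonempty)
    (_hint : ∀ x ∈ X, ∀ Q ∈ 𝒜₁ ∪ 𝒜₂, Integrable (f x) Q)
    {C : ℝ} (hb : ∀ x ∈ X, ∀ Q ∈ 𝒜₁ ∪ 𝒜₂, |∫ ξ, f x ξ ∂Q| ≤ C)
    (hne : (robustSolutions X f 𝒜₁).Nonempty) {τ : ℝ} (hτ : 0 < τ)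
    (growth : ∀ x ∈ X, robustValue X f 𝒜₁ + τ * Metric.infDist x (robustSolutions X f 𝒜₁) ^ 2 ≤
      worstCase f 𝒜₁ x) {x : E} (hx : x ∈ robustSolutions X f 𝒜₂) :
    Metric.infDist x (robustSolutions X f 𝒜₁) ≤ √(2 * hausdorffDistSets X f 𝒜₁ 𝒜₂ / τ) := by
  obtain ⟨y, hyX, hy⟩ := hne
  have hb₁ : ∀ z ∈ X, ∀ Q ∈ 𝒜₁, |∫ ξ, f z ξ ∂Q| ≤ C := fun z hz Q hQ => hb z hz Q (Or.inl hQ)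
  have hb₂ : ∀ z ∈ X, ∀ Q ∈ 𝒜₂, |∫ ξ, f z ξ ∂Q| ≤ C := fun z hz Q hQ => hb z hz Q (Or.inr hQ)
  refine le_sqrt_of_quadratic_growth hτ (hy.symm ▸ growth x hx.1)
    (worstCase_le_worstCase_add_hausdorffDistSets h₁ h₂ hb₁ hb₂ hx.1)
    (worstCase_le_of_mem_robustSolutions h₂ hb₂ hx hyX) ?_
  rw [hausdorffDistSets_comm]
  exact worstCase_le_worstCase_add_hausdorffDistSets h₂ h₁ hb₂ hb₁ hyX

/-- Under a second-order growth condition at `X*₁`, the deviation of `X*₂` from `X*₁` is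
bounded by `√(3·ℍ(𝒫₁,𝒫₂)/τ)`. -/
theorem dro_optimal_solutions_deviation_bound
    {Ξ E : Type*} [MeasurableSpace Ξ] [NormedAddCommGroup E] [NormedSpace ℝ E]
    (X : Set E) (hXne : X.Nonempty)
    (f : E → Ξ → ℝ)
    (𝒜₁ 𝒜₂ : Set (Measure Ξ)) (h₁ : 𝒜₁.Nonempty) (h₂ : 𝒜₂.Nonempty)
    (hprob : ∀ Q ∈ 𝒜₁ ∪ 𝒜₂, IsProbabilityMeasure Q)
    (hint : ∀ x ∈ X, ∀ Q ∈ 𝒜₁ ∪ 𝒜₂, Integrable (f x) Q)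
    (C : ℝ) (hC : 0 ≤ C)
    (hb : ∀ x ∈ X, ∀ Q ∈ 𝒜₁ ∪ 𝒜₂, |∫ ξ, f x ξ ∂Q| ≤ C)
    (v₁ v₂ : ℝ) (Xstar₁ Xstar₂ : Set E)
    (hv₁ : v₁ = ⨅ x : X, ⨆ Q : 𝒜₁, ∫ ξ, f (x : E) ξ ∂(Q : Measure Ξ))
    (hv₂ : v₂ = ⨅ x : X, ⨆ Q : 𝒜₂, ∫ ξ, f (x : E) ξ ∂(Q : Measure Ξ))
    (hX₁ : Xstar₁ = {x ∈ X | (⨆ Q : 𝒜₁, ∫ ξ, f x ξ ∂(Q : Measure Ξ)) = v₁})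
    (hX₂ : Xstar₂ = {x ∈ X | (⨆ Q : 𝒜₂, ∫ ξ, f x ξ ∂(Q : Measure Ξ)) = v₂})
    (hne₁ : Xstar₁.Nonempty) (hne₂ : Xstar₂.Nonempty)
    (τ : ℝ) (hτ : 0 < τ)
    (growth : ∀ x ∈ X, v₁ + τ * (⨅ y : Xstar₁, ‖x - (y : E)‖) ^ 2 ≤
      ⨆ Q : 𝒜₁, ∫ ξ, f x ξ ∂(Q : Measure Ξ)) :
    (⨆ x : Xstar₂, ⨅ y : Xstar₁, ‖(x : E) - (y : E)‖) ≤
      Real.sqrt (3 * hausdorffDistSets X f 𝒜₁ 𝒜₂ / τ) := by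
  subst hv₁ hv₂ hX₁ hX₂
  have hH : 2 * hausdorffDistSets X f 𝒜₁ 𝒜₂ / τ ≤ 3 * hausdorffDistSets X f 𝒜₁ 𝒜₂ / τ := by
    have := hausdorffDistSets_nonneg (X := X) (f := f) (𝒜 := 𝒜₁) (ℬ := 𝒜₂)
    gcongr
    norm_num
  simp only [← dist_eq_norm, ← Metric.infDist_eq_iInf] at growth ⊢
  exact Real.iSup_le (fun x => (dro_optimal_solutions_deviation_bound_general h₁ h₂ hint hb hne₁ hτ
    growth x.2).trans (Real.sqrt_le_sqrt hH)) (Real.sqrt_nonneg _)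
end
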